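/- Let Q be an irreducible conservative q-matrix on F with the given block structure, and let n ≥ 1. Then the LC-block-augmented truncation ₙQ has no closed communicating class that is a subset of F̄_n. -/

import Mathlib

/-!
A closed class `C ⊆ F̄_n` of `ₙQ` would also be closed under the positive rates of `Q`. Indeed, let
`a ∈ C` and `q a b > 0`. If `b` lies in a level `≤ n` or in the level of `a`, then `ₙQ` has a
positive rate from `a` to `b`; otherwise the rate `q a b` is part of the augmentation of the `n`-th
column block, so `ₙQ` has a positive rate from `a` to the state of level `n` with the phase of `b`
(a valid state since `n ≥ 1`), which is not in `C`. As `Q` is irreducible, `C` would then contain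
a state of level `0`, which is absurd.
-/

/-- The block-structured state space `F = ⋃_{k≥0} L_k`, where
`L_0 = {0} × {0,…,S₀}` and `L_k = {k} × {0,…,S₁}` for `k ≥ 1`. -/
abbrev BState (S0 S1 : ℕ) : Type := {p : ℕ × ℕ // p.2 ≤ if p.1 = 0 then S0 else S1}

/-- A (stable) q-matrix: nonnegative off-diagonal entries, and for each row the
off-diagonal entries are summable with sum at most `-q x x` (finite diagonal). -/
def IsQMatrix {α : Type*} (q : α → α → ℝ) : Prop :=
  (∀ x y : α, x ≠ y → 0 ≤ q x y) ∧
    ∀ x : α, Summable (fun y : {z : α // z ≠ x} => q x (y : α)) ∧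
      (∑' y : {z : α // z ≠ x}, q x (y : α)) ≤ - q x x

/-- A q-matrix is conservative if each of its rows sums to zero. -/
def IsConservative {α : Type*} (q : α → α → ℝ) : Prop :=
  ∀ x : α, (∑' y : {z : α // z ≠ x}, q x (y : α)) = - q x x

/-- Reachability: `y` is reachable from `x` through a chain of positive rates. -/
def Reaches {α : Type*} (q : α → α → ℝ) : α → α → Prop :=
  Relation.ReflTransGen (fun a b => 0 < q a b)

/-- Two states communicate if each is reachable from the other. -/
def Communicates {α : Type*} (q : α → α → ℝ) (x y : α) : Prop :=
  Reaches q x y ∧ Reaches q y x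

/-- A communicating class: an equivalence class of the communication relation. -/
def IsCommClass {α : Type*} (q : α → α → ℝ) (C : Set α) : Prop :=
  ∃ x : α, C = {y | Communicates q x y}

/-- A closed communicating class: no positive rate leads out of it. -/
def IsClosedCommClass {α : Type*} (q : α → α → ℝ) (C : Set α) : Prop :=
  IsCommClass q C ∧ ∀ x ∈ C, ∀ y ∉ C, q x y = 0

/-- Irreducibility: every state is reachable from every state. -/
def IsIrreducibleQ {α : Type*} (q : α → α → ℝ) : Prop :=
  ∀ x y : α, Reaches q x y

/-- The last-column-block-augmented northwest-corner truncation `ₙQ` of `Q`. -/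
noncomputable def LCtrunc (S0 S1 n : ℕ) (q : BState S0 S1 → BState S0 S1 → ℝ)
    (x y : BState S0 S1) : ℝ :=
  if y.1.1 < n then q x y
  else if y.1.1 = n then
    q x y + ∑' m : ℕ,
      if h : (n < m ∧ m ≠ x.1.1) ∧ y.1.2 ≤ (if m = 0 then S0 else S1)
        then q x ⟨(m, y.1.2), h.2⟩ else 0
  else if y.1.1 = x.1.1 then q x y else 0

/-- The summand of the augmentation term in `LCtrunc`: the rate from `x` to level `m`, phase `j`,
set to zero for the levels `m` that are not redirected to level `n`. -/
noncomputable def augTerm (S0 S1 n : ℕ) (q : BState S0 S1 → BState S0 S1 → ℝ)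
    (x : BState S0 S1) (j m : ℕ) : ℝ :=
  if h : (n < m ∧ m ≠ x.1.1) ∧ j ≤ (if m = 0 then S0 else S1)
    then q x ⟨(m, j), h.2⟩ else 0

lemma augTerm_nonneg {S0 S1 n : ℕ} {q : BState S0 S1 → BState S0 S1 → ℝ}
    (hq : IsQMatrix q) (x : BState S0 S1) (j m : ℕ) : 0 ≤ augTerm S0 S1 n q x j m := by
  by_cases h : (n < m ∧ m ≠ x.1.1) ∧ j ≤ (if m = 0 then S0 else S1)
  · rw [augTerm, dif_pos h]
    refine hq.1 _ _ fun hx => h.1.2 ?_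
    rw [hx]
  · rw [augTerm, dif_neg h]

/-- Without summability the `tsum` in `LCtrunc` would be the junk value `0`. -/
lemma augTerm_summable {S0 S1 n : ℕ} {q : BState S0 S1 → BState S0 S1 → ℝ}
    (hq : IsQMatrix q) (x : BState S0 S1) {j : ℕ} (hj : j ≤ S1) :
    Summable (augTerm S0 S1 n q x j) := by
  have hs : Summable (Set.indicator {z | z ≠ x} (q x)) :=
    summable_subtype_iff_indicator.1 (hq.2 x).1
  -- The phase `j` need not exist in level `0`, so the row is compared along the levels `m + 1`.
  let ι : ℕ → BState S0 S1 := fun m => ⟨(m + 1, j), by simpa using hj⟩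
  have hι : Function.Injective ι := by
    intro a b hab
    have := congrArg (fun z : BState S0 S1 => z.1.1) hab
    simpa [ι] using this
  refine (summable_nat_add_iff 1).1 ?_
  refine Summable.of_nonneg_of_le (fun m => augTerm_nonneg hq x j _) (fun m => ?_)
    (hs.comp_injective hι)
  have hnn : 0 ≤ Set.indicator {z | z ≠ x} (q x) (ι m) :=
    Set.indicator_nonneg (fun z hz => hq.1 x z (Ne.symm hz)) _
  by_cases h : (n < m + 1 ∧ m + 1 ≠ x.1.1) ∧ j ≤ (if m + 1 = 0 then S0 else S1)
  · have hne : ι m ∈ {z | z ≠ x} := by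
      intro hx
      apply h.1.2
      rw [← hx]
    rw [augTerm, dif_pos h]
    simp only [Function.comp_apply, Set.indicator_of_mem hne]
    exact le_rfl
  · rw [augTerm, dif_neg h]
    exact hnn

lemma LCtrunc_level_n {S0 S1 n : ℕ} (q : BState S0 S1 → BState S0 S1 → ℝ)
    (x y : BState S0 S1) (hy : y.1.1 = n) :
    LCtrunc S0 S1 n q x y = q x y + ∑' m, augTerm S0 S1 n q x y.1.2 m := by
  simp only [LCtrunc, hy, lt_irrefl, if_false, if_true, augTerm]

/-- A closed class of `ₙQ` inside `F̄_n` is closed under the positive rates of `Q`. -/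
lemma mem_of_rate_pos {S0 S1 n : ℕ} {q : BState S0 S1 → BState S0 S1 → ℝ}
    (hq : IsQMatrix q) (hn : 1 ≤ n) {C : Set (BState S0 S1)}
    (hcl : ∀ x ∈ C, ∀ y ∉ C, LCtrunc S0 S1 n q x y = 0)
    (hsub : C ⊆ {x : BState S0 S1 | n < x.1.1})
    {a b : BState S0 S1} (ha : a ∈ C) (hab : 0 < q a b) : b ∈ C := by
  by_contra hb
  have h0 := hcl a ha b hb
  rcases lt_trichotomy b.1.1 n with hlt | heq | hgt
  · simp only [LCtrunc, if_pos hlt] at h0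
    exact hab.ne' h0
  · rw [LCtrunc_level_n q a b heq] at h0
    have : 0 ≤ ∑' m, augTerm S0 S1 n q a b.1.2 m := tsum_nonneg (augTerm_nonneg hq a _)
    linarith
  · by_cases hk : b.1.1 = a.1.1
    · rw [LCtrunc, if_neg hgt.not_gt, if_neg hgt.ne', if_pos hk] at h0
      exact hab.ne' h0
    · have hj : b.1.2 ≤ S1 := by
        have := b.2
        rwa [if_neg (by omega)] at this
      let y : BState S0 S1 := ⟨(n, b.1.2), by simpa [show n ≠ 0 by omega] using hj⟩
      have hyC : y ∉ C := fun h => lt_irrefl n (hsub h)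
      have hay : a ≠ y := fun h => hyC (h ▸ ha)
      have h1 := hcl a ha y hyC
      rw [LCtrunc_level_n q a y rfl] at h1
      have hle : augTerm S0 S1 n q a b.1.2 b.1.1 ≤ ∑' m, augTerm S0 S1 n q a b.1.2 m :=
        (augTerm_summable hq a hj).le_tsum _ fun m _ => augTerm_nonneg hq a _ m
      have hb' : augTerm S0 S1 n q a b.1.2 b.1.1 = q a b := dif_pos ⟨⟨hgt, hk⟩, b.2⟩
      have := hq.1 a y hay
      change q a y + ∑' m, augTerm S0 S1 n q a b.1.2 m = 0 at h1
      linarith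

/-- The LC-block-augmented truncation of an irreducible conservative q-matrix has
no closed communicating class contained in `F̄_n`. -/
theorem stmt1 (S0 S1 : ℕ) (q : BState S0 S1 → BState S0 S1 → ℝ)
    (hq : IsQMatrix q) (hcons : IsConservative q) (hirr : IsIrreducibleQ q)
    (n : ℕ) (hn : 1 ≤ n) :
    ∀ C : Set (BState S0 S1), IsClosedCommClass (LCtrunc S0 S1 n q) C →
      ¬ C ⊆ {x : BState S0 S1 | n < x.1.1} := by
  rintro C ⟨⟨x, rfl⟩, hcl⟩ hsub
  have hreach : ∀ z, Reaches q x z → z ∈ {y | Communicates (LCtrunc S0 S1 n q) x y} := by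
    intro z hz
    induction hz with
    | refl => exact ⟨Relation.ReflTransGen.refl, Relation.ReflTransGen.refl⟩
    | tail _ hbc ih => exact mem_of_rate_pos hq hn hcl hsub ih hbc
  have h0 := hsub (hreach ⟨(0, 0), Nat.zero_le _⟩ (hirr _ _))
  exact Nat.not_lt_zero n h0
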